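/- Let L ≤ R be natural numbers and let P be a partition of [L,R) into aligned dyadic intervals such that no two members of P are siblings, i.e., P never contains both [2a·2^k, (2a+1)·2^k) and [(2a+1)·2^k, (2a+2)·2^k) for any a, k ∈ ℕ. Then P equals the compact range of [L,R). (Consequently, the Merge procedure, which repeatedly replaces sibling pairs by their parent until none remain, always produces the compact range of the combined interval.) -/

import Mathlib

/-- An aligned dyadic interval of naturals: `[a·2^k, (a+1)·2^k)`. -/
def IsDyadic (I : Set ℕ) : Prop :=
  ∃ a k : ℕ, I = Set.Ico (a * 2 ^ k) ((a + 1) * 2 ^ k)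

/-- The compact range of `[L, R)`: the set of maximal aligned dyadic intervals
contained in `[L, R)`. -/
def CompactRange (L R : ℕ) : Set (Set ℕ) :=
  {I | IsDyadic I ∧ I ⊆ Set.Ico L R ∧
    ∀ J : Set ℕ, IsDyadic J → J ⊆ Set.Ico L R → I ⊆ J → I = J}

/-! A dyadic interval contained in `⋃₀ P` lies in a single member of `P`, by induction on its
length: its halves lie in members `I` and `J` of `P`, and a dyadic interval properly containing one
half contains the parent, so the only way to fail is for `I` and `J` to be the two halves, which are
siblings. Hence members of `P` are maximal and every maximal interval is a member. -/

/-- The aligned dyadic interval of length `2 ^ k` with index `a`. Its sibling is the other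
half of `dyadicIco (a / 2) (k + 1)`. -/
def dyadicIco (a k : ℕ) : Set ℕ :=
  Set.Ico (a * 2 ^ k) ((a + 1) * 2 ^ k)

/-- A family of sets is sibling-free if it never contains both halves of an aligned dyadic
interval. -/
def SiblingFree (P : Set (Set ℕ)) : Prop :=
  ∀ a k : ℕ, ¬ (dyadicIco (2 * a) k ∈ P ∧ dyadicIco (2 * a + 1) k ∈ P)

section

variable {a b j k x : ℕ} {J : Set ℕ} {P : Set (Set ℕ)}

theorem mem_dyadicIco : x ∈ dyadicIco a k ↔ x / 2 ^ k = a := by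
  have hpos : 0 < 2 ^ k := Nat.two_pow_pos k
  rw [dyadicIco, Set.mem_Ico, ← Nat.le_div_iff_mul_le hpos, ← Nat.div_lt_iff_lt_mul hpos]
  lia

theorem dyadicIco_nonempty (a k : ℕ) : (dyadicIco a k).Nonempty :=
  ⟨a * 2 ^ k, mem_dyadicIco.2 (Nat.mul_div_cancel a (Nat.two_pow_pos k))⟩

theorem IsDyadic.nonempty (hJ : IsDyadic J) : J.Nonempty := by
  obtain ⟨a, k, rfl⟩ := hJ
  exact dyadicIco_nonempty a k

theorem dyadicIco_zero (a : ℕ) : dyadicIco a 0 = {a} := by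
  ext x
  simp [mem_dyadicIco]

theorem dyadicIco_succ (a k : ℕ) :
    dyadicIco a (k + 1) = dyadicIco (2 * a) k ∪ dyadicIco (2 * a + 1) k := by
  ext x
  simp only [Set.mem_union, mem_dyadicIco, pow_succ, ← Nat.div_div_eq_div_mul]
  lia

theorem dyadicIco_subset_parent (a k : ℕ) : dyadicIco a k ⊆ dyadicIco (a / 2) (k + 1) := by
  intro x hx
  rw [mem_dyadicIco] at hx ⊢
  rw [pow_succ, ← Nat.div_div_eq_div_mul, hx]

theorem dyadicIco_subset_of_inter_nonempty (hkj : k ≤ j)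
    (h : (dyadicIco a k ∩ dyadicIco b j).Nonempty) :
    dyadicIco a k ⊆ dyadicIco b j := by
  obtain ⟨m, rfl⟩ := Nat.exists_eq_add_of_le hkj
  obtain ⟨x, hxa, hxb⟩ := h
  intro y hy
  rw [mem_dyadicIco] at hxa hy
  rw [mem_dyadicIco, pow_add, ← Nat.div_div_eq_div_mul] at hxb ⊢
  rw [hy, ← hxa, hxb]

theorem IsDyadic.eq_or_parent_subset (hJ : IsDyadic J) (h : dyadicIco a k ⊆ J) :
    dyadicIco a k = J ∨ dyadicIco (a / 2) (k + 1) ⊆ J := by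
  obtain ⟨b, j, rfl⟩ := hJ
  obtain ⟨x, hx⟩ := dyadicIco_nonempty a k
  rcases Nat.lt_or_ge k j with hkj | hjk
  · exact .inr (dyadicIco_subset_of_inter_nonempty hkj
      ⟨x, dyadicIco_subset_parent a k hx, h hx⟩)
  · exact .inl (h.antisymm (dyadicIco_subset_of_inter_nonempty hjk ⟨x, h hx, hx⟩))

theorem SiblingFree.exists_mem_dyadicIco_subset (hsib : SiblingFree P)
    (hdyadic : ∀ I ∈ P, IsDyadic I) (h : dyadicIco a k ⊆ ⋃₀ P) :
    ∃ I ∈ P, dyadicIco a k ⊆ I := by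
  induction k generalizing a with
  | zero => simpa only [dyadicIco_zero, Set.singleton_subset_iff, Set.mem_sUnion] using h
  | succ k ih =>
    obtain ⟨hleft, hright⟩ := Set.union_subset_iff.1 (dyadicIco_succ a k ▸ h)
    obtain ⟨I, hI, hleftI⟩ := ih hleft
    obtain ⟨J, hJ, hrightJ⟩ := ih hright
    rcases (hdyadic I hI).eq_or_parent_subset hleftI with rfl | hparentI
    · rcases (hdyadic J hJ).eq_or_parent_subset hrightJ with rfl | hparentJ
      · exact absurd ⟨hI, hJ⟩ (hsib a k)
      · exact ⟨J, hJ, by rwa [show (2 * a + 1) / 2 = a by lia] at hparentJ⟩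
    · exact ⟨I, hI, by rwa [show 2 * a / 2 = a by lia] at hparentI⟩

theorem isAntichain_of_pairwise_disjoint {α : Type*} [PartialOrder α] [OrderBot α] {s : Set α}
    (hdisj : s.Pairwise Disjoint) (hbot : ⊥ ∉ s) : IsAntichain (· ≤ ·) s :=
  fun _ ha _ hb hne hab ↦ hbot ((hdisj ha hb hne).eq_bot_of_le hab ▸ ha)

theorem compactRange_eq_setOf_maximal (L R : ℕ) :
    CompactRange L R = {I | Maximal (fun J ↦ IsDyadic J ∧ J ⊆ Set.Ico L R) I} := by
  ext I
  simp only [CompactRange, Set.mem_ofPred_eq, maximal_subset_iff, and_imp, and_assoc]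

theorem sibling_free_partition_eq_compactRange_general (hdyadic : ∀ I ∈ P, IsDyadic I)
    (hanti : IsAntichain (· ⊆ ·) P) (hsib : SiblingFree P) :
    P = {I | Maximal (fun J ↦ IsDyadic J ∧ J ⊆ ⋃₀ P) I} := by
  have hmem : ∀ I ∈ P, IsDyadic I ∧ I ⊆ ⋃₀ P := fun I hI ↦
    ⟨hdyadic I hI, Set.subset_sUnion_of_mem hI⟩
  have hcov : ∀ J, IsDyadic J ∧ J ⊆ ⋃₀ P → ∃ I ∈ P, J ⊆ I := by
    rintro _ ⟨⟨a, k, rfl⟩, h⟩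
    exact hsib.exists_mem_dyadicIco_subset hdyadic h
  ext I
  rw [Set.mem_ofPred_eq]
  constructor
  · refine fun hI ↦ ⟨hmem I hI, fun J hJ hIJ ↦ ?_⟩
    obtain ⟨I', hI', hJI'⟩ := hcov J hJ
    rwa [hanti.eq hI hI' (hIJ.trans hJI')]
  · intro hI
    obtain ⟨I', hI', hII'⟩ := hcov I hI.prop
    rwa [hI.eq_of_subset (hmem I' hI') hII']

end

/-- A partition of `[L, R)` into aligned dyadic intervals that contains no pair of
sibling intervals equals the compact range of `[L, R)`. -/
theorem sibling_free_partition_eq_compactRange (L R : ℕ) (h : L ≤ R) (P : Set (Set ℕ))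
    (hdyadic : ∀ I ∈ P, IsDyadic I) (hdisj : P.Pairwise Disjoint)
    (hcover : ⋃₀ P = Set.Ico L R)
    (hsib : ¬ ∃ a k : ℕ,
      Set.Ico (2 * a * 2 ^ k) ((2 * a + 1) * 2 ^ k) ∈ P ∧
      Set.Ico ((2 * a + 1) * 2 ^ k) ((2 * a + 2) * 2 ^ k) ∈ P) :
    P = CompactRange L R := by
  rw [compactRange_eq_setOf_maximal, ← hcover]
  exact sibling_free_partition_eq_compactRange_general hdyadic
    (isAntichain_of_pairwise_disjoint hdisj fun hempty ↦ (hdyadic ∅ hempty).nonempty.ne_empty rfl)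
    fun a k hak ↦ hsib ⟨a, k, hak⟩
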